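/- arXiv:1901.07503 — 3 statements merged into one kernel-verified Lean document; each statement's English description precedes it below -/
import Mathlib

section
/- Let (X, Σ) be an implicational base with closure operator φ, let B⁺ and B⁻ be dual antichains of closed sets in the lattice L(Σ), and let H = {X \ B : B ∈ B⁺} be the complementary hypergraph of B⁺. Then for every I ∈ B⁻ and every minimal generating set T of I, the set T is an inclusion-minimal transversal of H and φ(T) = I. In particular, every I ∈ B⁻ equals φ(T) for some T ∈ Tr(H). -/
/-- A set `C` is closed w.r.t. the implicational base `Sig`. -/
def ImpClosed {α : Type*} (Sig : Finset (Finset α × α)) (C : Set α) : Prop :=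
  ∀ p ∈ Sig, (p.1 : Set α) ⊆ C → p.2 ∈ C

/-- `phi` is the closure operator of the implicational base `Sig`. -/
def IsClosureOperator {α : Type*} (Sig : Finset (Finset α × α)) (phi : Set α → Set α) : Prop :=
  ∀ S : Set α, S ⊆ phi S ∧ ImpClosed Sig (phi S) ∧
    ∀ C : Set α, ImpClosed Sig C → S ⊆ C → phi S ⊆ C

/-- `T` is a transversal of the hypergraph `H`. -/
def IsTransversal {α : Type*} (H : Set (Set α)) (T : Set α) : Prop :=
  ∀ E ∈ H, (T ∩ E).Nonempty

/-- `T` is an inclusion-minimal transversal of `H`. -/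
def IsMinTransversal {α : Type*} (H : Set (Set α)) (T : Set α) : Prop :=
  IsTransversal H T ∧ ∀ T' : Set α, IsTransversal H T' → T' ⊆ T → T' = T

/-- The antichains `Bp` and `Bm` of closed sets are dual in the lattice of
closed sets of `Sig`. -/
def AreDual {α : Type*} (Sig : Finset (Finset α × α)) (Bp Bm : Set (Set α)) : Prop :=
  ∀ C : Set α, ImpClosed Sig C → Xor' (∃ B ∈ Bp, C ⊆ B) (∃ I ∈ Bm, I ⊆ C)

/-- `T` is a generating set of `I` w.r.t. `phi`. -/
def IsGeneratingSet {α : Type*} (phi : Set α → Set α) (I T : Set α) : Prop :=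
  T ⊆ I ∧ I ⊆ phi T

/-- `T` is a minimal generating set of `I` w.r.t. `phi`. -/
def IsMinGeneratingSet {α : Type*} (phi : Set α → Set α) (I T : Set α) : Prop :=
  IsGeneratingSet phi I T ∧ ∀ x ∈ T, ¬ I ⊆ phi (T \ {x})

/-!
A set `T` is contained in a closed set exactly when its closure is, so `T` meets every complement of a
member of `Bp` iff `φ(T)` lies below no member of `Bp`, which by duality means that `φ(T)` contains a
member of `Bm`. If `T` is a minimal generating set of `I ∈ Bm` and `T' ⊆ T` is a transversal, the
member of `Bm` contained in `φ(T') ⊆ I` must be `I` itself, since `Bm` is an antichain; so `T'`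
generates `I`, whence `T' = T`. Minimal generating sets exist because `φ` adds only conclusions of
implications: a generating set of `I` omits only finitely many elements of `I`.
-/

section MinGenerators

variable {α : Type*} {phi : Set α → Set α} {I T V : Set α}

theorem isMinTransversal_iff_minimal {H : Set (Set α)} :
    IsMinTransversal H T ↔ Minimal (IsTransversal H) T := by
  simp only [IsMinTransversal, minimal_subset_iff, eq_comm]

theorem isMinGeneratingSet_iff_minimal (hphi : Monotone phi) :
    IsMinGeneratingSet phi I T ↔ T ⊆ I ∧ Minimal (I ⊆ phi ·) T := by
  rw [Set.minimal_iff_forall_sdiff_singleton fun S R hR hRS => hR.trans (hphi hRS), ← and_assoc]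
  rfl

theorem finite_setOf_isGeneratingSet (hV : V.Finite) (hphi : ∀ S, phi S ⊆ S ∪ V) :
    {T | IsGeneratingSet phi I T}.Finite :=
  (hV.finite_subsets.image (I \ ·)).subset fun T hT =>
    ⟨I \ T, Set.sdiff_subset_iff.2 (hT.2.trans (hphi T)), Set.sdiff_sdiff_cancel_left hT.1⟩

theorem exists_isMinGeneratingSet (hI : I ⊆ phi I)
    (hfin : {T | IsGeneratingSet phi I T}.Finite) : ∃ T, IsMinGeneratingSet phi I T := by
  obtain ⟨T, hT⟩ := hfin.exists_minimal ⟨I, subset_rfl, hI⟩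
  refine ⟨T, hT.prop, fun x hx hIx => ?_⟩
  have hgen : IsGeneratingSet phi I (T \ {x}) := ⟨Set.sdiff_subset.trans hT.prop.1, hIx⟩
  exact hT.notMem_of_prop_sdiff_singleton hgen hx

end MinGenerators

section Duality

variable {α : Type*} {c : ClosureOperator (Set α)} {I T : Set α} {Bp Bm : Set (Set α)}

theorem IsGeneratingSet.closure_eq (hT : IsGeneratingSet c I T) (hI : c.IsClosed I) : c T = I :=
  (ClosureOperator.closure_min hT.1 hI).antisymm hT.2

theorem isTransversal_image_compl_iff :
    IsTransversal ((fun B => Bᶜ) '' Bp) T ↔ ¬ ∃ B ∈ Bp, T ⊆ B := by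
  simp only [IsTransversal, Set.forall_mem_image, Set.inter_compl_nonempty_iff, not_exists, not_and]

theorem isTransversal_image_compl_iff_exists_subset_closure
    (hBp : ∀ B ∈ Bp, c.IsClosed B)
    (hdual : ∀ C, c.IsClosed C → Xor (∃ B ∈ Bp, C ⊆ B) (∃ J ∈ Bm, J ⊆ C)) :
    IsTransversal ((fun B => Bᶜ) '' Bp) T ↔ ∃ J ∈ Bm, J ⊆ c T := by
  have below_iff : (∃ B ∈ Bp, c T ⊆ B) ↔ ∃ B ∈ Bp, T ⊆ B :=
    exists_congr fun B => and_congr_right fun hB => (hBp B hB).closure_le_iff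
  rw [isTransversal_image_compl_iff, ← below_iff]
  exact (xor_iff_not_iff' ..).1 (hdual (c T) (c.isClosed_closure T))

theorem IsMinGeneratingSet.isMinTransversal (hT : IsMinGeneratingSet c I T)
    (hIm : I ∈ Bm) (hI : c.IsClosed I)
    (hBp : ∀ B ∈ Bp, c.IsClosed B) (hBm : IsAntichain (· ⊆ ·) Bm)
    (hdual : ∀ C, c.IsClosed C → Xor (∃ B ∈ Bp, C ⊆ B) (∃ J ∈ Bm, J ⊆ C)) :
    IsMinTransversal ((fun B => Bᶜ) '' Bp) T := by
  obtain ⟨hTI, hmin⟩ := (isMinGeneratingSet_iff_minimal c.monotone).1 hT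
  have transversal_iff {S : Set α} := isTransversal_image_compl_iff_exists_subset_closure
    (T := S) hBp hdual
  refine isMinTransversal_iff_minimal.2 ⟨transversal_iff.2 ⟨I, hIm, hmin.prop⟩, ?_⟩
  intro T' hT' hT'T
  obtain ⟨J, hJ, hJT'⟩ := transversal_iff.1 hT'
  have hJI : J = I :=
    hBm.eq hJ hIm (hJT'.trans (ClosureOperator.closure_min (hT'T.trans hTI) hI))
  exact hmin.le_of_le (hJI ▸ hJT') hT'T

end Duality

section ImplicationalBase

variable {α : Type*} {Sig : Finset (Finset α × α)} {phi : Set α → Set α}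

/-- The map `phi` of an implicational base as a bundled `ClosureOperator`, so that the library on
closure operators applies; its closed sets are by definition those satisfying `ImpClosed Sig`. -/
def IsClosureOperator.toClosureOperator (hphi : IsClosureOperator Sig phi) :
    ClosureOperator (Set α) :=
  .ofPred phi (ImpClosed Sig) (fun S => (hphi S).1) (fun S => (hphi S).2.1)
    fun S C hSC hC => (hphi S).2.2 C hC hSC

theorem IsClosureOperator.subset_union_conclusions (hphi : IsClosureOperator Sig phi) (S : Set α) :
    phi S ⊆ S ∪ Prod.snd '' (Sig : Set (Finset α × α)) :=
  (hphi S).2.2 _ (fun p hp _ => .inr ⟨p, hp, rfl⟩) Set.subset_union_left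

end ImplicationalBase

theorem stmt_2_general {α : Type*} (Sig : Finset (Finset α × α)) (phi : Set α → Set α)
    (hphi : IsClosureOperator Sig phi) (Bp Bm : Set (Set α))
    (hBpClosed : ∀ B ∈ Bp, ImpClosed Sig B) (hBmClosed : ∀ I ∈ Bm, ImpClosed Sig I)
    (hBmAC : IsAntichain (· ⊆ ·) Bm) (hdual : AreDual Sig Bp Bm)
    (H : Set (Set α)) (hH : H = (fun B => Bᶜ) '' Bp) :
    (∀ I ∈ Bm, ∀ T : Set α, IsMinGeneratingSet phi I T →
        IsMinTransversal H T ∧ phi T = I) ∧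
    (∀ I ∈ Bm, ∃ T : Set α, IsMinTransversal H T ∧ phi T = I) := by
  subst hH
  let c := hphi.toClosureOperator
  have minTransversal_of_minGenerating (I) (hI : I ∈ Bm) (T) (hT : IsMinGeneratingSet c I T) :
      IsMinTransversal ((fun B => Bᶜ) '' Bp) T ∧ c T = I :=
    ⟨hT.isMinTransversal hI (hBmClosed I hI) hBpClosed hBmAC hdual,
      hT.1.closure_eq (hBmClosed I hI)⟩
  refine ⟨minTransversal_of_minGenerating, fun I hI => ?_⟩
  have hfin : {T | IsGeneratingSet phi I T}.Finite :=
    finite_setOf_isGeneratingSet (Sig.finite_toSet.image Prod.snd) hphi.subset_union_conclusions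
  obtain ⟨T, hT⟩ := exists_isMinGeneratingSet (hphi I).1 hfin
  exact ⟨T, minTransversal_of_minGenerating I hI T hT⟩

theorem stmt_2 {α : Type*} [DecidableEq α] [Fintype α]
    (Sig : Finset (Finset α × α)) (phi : Set α → Set α)
    (hphi : IsClosureOperator Sig phi) (Bp Bm : Set (Set α))
    (hBpClosed : ∀ B ∈ Bp, ImpClosed Sig B) (hBmClosed : ∀ I ∈ Bm, ImpClosed Sig I)
    (hBpAC : IsAntichain (· ⊆ ·) Bp) (hBmAC : IsAntichain (· ⊆ ·) Bm)
    (hdual : AreDual Sig Bp Bm)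
    (H : Set (Set α)) (hH : H = (fun B => Bᶜ) '' Bp) :
    (∀ I ∈ Bm, ∀ T : Set α, IsMinGeneratingSet phi I T →
        IsMinTransversal H T ∧ phi T = I) ∧
    (∀ I ∈ Bm, ∃ T : Set α, IsMinTransversal H T ∧ phi T = I) :=
  stmt_2_general Sig phi hphi Bp Bm hBpClosed hBmClosed hBmAC hdual H hH
end

section
/- In the construction from the one-in-three 3SAT reduction: if there exists a set C ⊆ X closed in Σ such that C ⊈ B_j for every j ∈ {1,…,m} and F ⊈ C, then φ admits a one-in-three truth assignment. -/
/-- The ground set of the reduction: `n` variable elements, `m` clause elements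
`y₁, …, y_m`, and a special element `z`. -/
abbrev RedV (n m : ℕ) := Fin n ⊕ Fin m ⊕ Unit

/-- The variable element `xᵥ`. -/
def xv {n m : ℕ} (v : Fin n) : RedV n m := Sum.inl v

/-- The clause element `y_j`. -/
def yv {n m : ℕ} (j : Fin m) : RedV n m := Sum.inr (Sum.inl j)

/-- The special element `z`. -/
def zv {n m : ℕ} : RedV n m := Sum.inr (Sum.inr ())

/-- `C` is closed in the implicational base `Σ` of the reduction. -/
def RedClosed {n m : ℕ} (c : Fin m → Fin 3 → Fin n) (C : Set (RedV n m)) : Prop :=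
  (∀ (j : Fin m) (i₁ i₂ : Fin 3), i₁ ≠ i₂ →
      xv (c j i₁) ∈ C → xv (c j i₂) ∈ C → zv ∈ C) ∧
  (∀ (j : Fin m) (i : Fin 3), zv ∈ C → xv (c j i) ∈ C → yv j ∈ C) ∧
  (∀ j : Fin m, yv j ∈ C → zv ∈ C)

/-- The set `B_j = X \ ({y_j} ∪ C_j)`. -/
def RedB {n m : ℕ} (c : Fin m → Fin 3 → Fin n) (j : Fin m) : Set (RedV n m) :=
  ({yv j} ∪ Set.range (fun i : Fin 3 => xv (c j i)))ᶜ

/-- The set `F = {y₁, …, y_m, z}`. -/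
def RedF (n m : ℕ) : Set (RedV n m) :=
  Set.range (yv : Fin m → RedV n m) ∪ {zv}

/-!
Since `C ⊈ B_j`, the set `C` contains `y_j` or a variable of the clause `C_j`. If `z ∈ C`, then in
both cases `y_j ∈ C`, so `F ⊆ C`; hence `z ∉ C`. Then no `y_j` lies in `C`, so `C` meets every
clause, and it meets none of them twice because two variables of one clause imply `z`.
-/

section Reduction

variable {n m : ℕ} {c : Fin m → Fin 3 → Fin n} {C : Set (RedV n m)} {j : Fin m}

theorem not_subset_redB_iff : ¬ C ⊆ RedB c j ↔ yv j ∈ C ∨ ∃ i, xv (c j i) ∈ C := by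
  rw [RedB, Set.subset_compl_comm, Set.union_subset_iff, Set.singleton_subset_iff,
    Set.range_subset_iff]
  simp only [Set.mem_compl_iff, not_and_or, not_forall, not_not]

namespace RedClosed

theorem yv_mem (hC : RedClosed c C) (hz : zv ∈ C) (hj : ¬ C ⊆ RedB c j) : yv j ∈ C := by
  obtain ⟨-, yv_of_zv_xv, -⟩ := hC
  rcases not_subset_redB_iff.mp hj with hy | ⟨i, hi⟩
  · exact hy
  · exact yv_of_zv_xv j i hz hi

theorem redF_subset (hC : RedClosed c C) (hz : zv ∈ C) (hCB : ∀ j, ¬ C ⊆ RedB c j) :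
    RedF n m ⊆ C :=
  Set.union_subset (Set.range_subset_iff.mpr fun j => hC.yv_mem hz (hCB j))
    (Set.singleton_subset_iff.mpr hz)

theorem existsUnique_xv_mem (hC : RedClosed c C) (hz : zv ∉ C) (hj : ¬ C ⊆ RedB c j) :
    ∃! i, xv (c j i) ∈ C := by
  obtain ⟨zv_of_xv_xv, -, zv_of_yv⟩ := hC
  have hy : yv j ∉ C := fun hy => hz (zv_of_yv j hy)
  obtain ⟨i, hi⟩ := (not_subset_redB_iff.mp hj).resolve_left hy
  refine ⟨i, hi, fun k hk => ?_⟩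
  by_contra hne
  exact hz (zv_of_xv_xv j k i hne hk hi)

end RedClosed

theorem stmt_12_general (hC : RedClosed c C) (hCB : ∀ j, ¬ C ⊆ RedB c j)
    (hCF : ¬ RedF n m ⊆ C) (j : Fin m) : ∃! i, xv (c j i) ∈ C :=
  have hz : zv ∉ C := fun hz => hCF (hC.redF_subset hz hCB)
  hC.existsUnique_xv_mem hz (hCB j)

end Reduction

theorem stmt_12 (n m : ℕ) (c : Fin m → Fin 3 → Fin n)
    (hdist : ∀ j : Fin m, Function.Injective (c j))
    (hvar : ∀ v : Fin n, ∃ (j : Fin m) (i : Fin 3), c j i = v)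
    (C : Set (RedV n m)) (hC : RedClosed c C)
    (hCB : ∀ j : Fin m, ¬ C ⊆ RedB c j) (hCF : ¬ RedF n m ⊆ C) :
    ∃ T : Set (Fin n), ∀ j : Fin m, ∃! i : Fin 3, c j i ∈ T :=
  ⟨{v | xv v ∈ C}, stmt_12_general hC hCB hCF⟩
end

section
/- In the construction from the one-in-three 3SAT reduction, the antichains B⁺ = {B₁,…,B_m} and B⁻ = {F} are dual in the lattice of closed sets of Σ if and only if φ admits no one-in-three truth assignment. -/
/-- The antichains `B⁺ = {B₁, …, B_m}` and `B⁻ = {F}` are dual in the lattice of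
closed sets: every closed set satisfies exactly one of the two conditions. -/
def RedDual {n m : ℕ} (c : Fin m → Fin 3 → Fin n) : Prop :=
  ∀ C : Set (RedV n m), RedClosed c C →
    Xor' (∃ j : Fin m, C ⊆ RedB c j) (RedF n m ⊆ C)

/-!
Every closed set is covered by `B⁺` or by `B⁻` unless it misses `z`: once `z` belongs to a closed
set `C` that lies below no `B_j`, the implications `{z, c_{j,i}} → y_j` force `F ⊆ C`. A closed set
missing `z` contains no `y_j` either, so it is a set `T` of variables. Such a `T` is closed exactly
when it meets each clause at most once, and lies below no `B_j` exactly when it meets each clause at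
least once; the closed sets left uncovered are therefore the one-in-three assignments.
-/

/-- A set `T` of variables is a one-in-three truth assignment for the clauses `c`. True positions
are counted rather than true variables, so a repeated variable counts with its multiplicity. -/
def IsOneInThree {n m : ℕ} (c : Fin m → Fin 3 → Fin n) (T : Set (Fin n)) : Prop :=
  ∀ j : Fin m, ∃! i : Fin 3, c j i ∈ T

section

variable {n m : ℕ} {c : Fin m → Fin 3 → Fin n} {C : Set (RedV n m)} {T : Set (Fin n)} {j : Fin m}

theorem xv_injective : Function.Injective (xv : Fin n → RedV n m) :=
  Sum.inl_injective

theorem yv_notMem_image_xv : yv j ∉ (xv '' T : Set (RedV n m)) := by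
  rintro ⟨v, -, hv⟩
  exact Sum.inl_ne_inr hv

theorem zv_notMem_image_xv : zv ∉ (xv '' T : Set (RedV n m)) := by
  rintro ⟨v, -, hv⟩
  exact Sum.inl_ne_inr hv

theorem zv_mem_redF : zv ∈ RedF n m :=
  Or.inr rfl

theorem yv_mem_redF (j : Fin m) : yv j ∈ RedF n m :=
  Or.inl ⟨j, rfl⟩

theorem subset_redB_iff : C ⊆ RedB c j ↔ yv j ∉ C ∧ ∀ i, xv (c j i) ∉ C := by
  rw [RedB, Set.subset_compl_iff_disjoint_right, Set.disjoint_union_right,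
    Set.disjoint_singleton_right, Set.disjoint_right, Set.forall_mem_range]

theorem redDual_iff :
    RedDual c ↔ ∀ C, RedClosed c C → RedF n m ⊆ C ∨ ∃ j, C ⊆ RedB c j := by
  have not_both (C : Set (RedV n m)) : ¬ ((∃ j, C ⊆ RedB c j) ∧ RedF n m ⊆ C) := by
    rintro ⟨⟨j, hB⟩, hF⟩
    exact (subset_redB_iff.1 hB).1 (hF (yv_mem_redF j))
  refine forall₂_congr fun C _ ↦ ?_
  exact (xor_iff_or_and_not_and _ _).trans ((and_iff_left (not_both C)).trans or_comm)

theorem RedClosed.redF_subset_s13 (hC : RedClosed c C) (hz : zv ∈ C) (hB : ∀ j, ¬ C ⊆ RedB c j) :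
    RedF n m ⊆ C := by
  obtain ⟨-, yv_mem_of_xv_mem, -⟩ := hC
  rintro _ (⟨j, rfl⟩ | rfl)
  · by_contra hy
    exact hB j (subset_redB_iff.2 ⟨hy, fun i hx ↦ hy (yv_mem_of_xv_mem j i hz hx)⟩)
  · exact hz

theorem RedClosed.image_xv_preimage (hC : RedClosed c C) (hz : zv ∉ C) :
    xv '' (xv ⁻¹' C) = C := by
  obtain ⟨-, -, zv_mem_of_yv_mem⟩ := hC
  refine Set.image_preimage_eq_of_subset ?_
  rintro (v | j | _) ha
  · exact ⟨v, rfl⟩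
  · exact absurd (zv_mem_of_yv_mem j ha) hz
  · exact absurd ha hz

theorem redClosed_image_xv_iff :
    RedClosed c (xv '' T) ↔ ∀ j, {i | c j i ∈ T}.Subsingleton := by
  simp only [RedClosed, xv_injective.mem_set_image, zv_notMem_image_xv, yv_notMem_image_xv,
    false_imp_iff, imp_false, not_false_eq_true, implies_true, and_true]
  exact forall_congr' fun j ↦
    ⟨fun h i₁ h₁ i₂ h₂ ↦ by_contra fun hne ↦ h i₁ i₂ hne h₁ h₂,
      fun h i₁ i₂ hne h₁ h₂ ↦ hne (h h₁ h₂)⟩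

theorem image_xv_subset_redB_iff : xv '' T ⊆ RedB c j ↔ ∀ i, c j i ∉ T := by
  simp only [subset_redB_iff, xv_injective.mem_set_image, yv_notMem_image_xv, not_false_eq_true,
    true_and]

theorem isOneInThree_iff_redClosed :
    IsOneInThree c T ↔ RedClosed c (xv '' T) ∧ ∀ j, ¬ xv '' T ⊆ RedB c j := by
  simp only [redClosed_image_xv_iff, image_xv_subset_redB_iff, not_forall, not_not, ← forall_and]
  exact forall_congr' fun j ↦
    ⟨fun h ↦ ⟨fun _ h₁ _ h₂ ↦ h.unique h₁ h₂, h.exists⟩,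
      fun ⟨h_subsingleton, i, hi⟩ ↦ ⟨i, hi, fun _ hk ↦ h_subsingleton hk hi⟩⟩

end

theorem stmt_13_general {n m : ℕ} (c : Fin m → Fin 3 → Fin n) :
    RedDual c ↔ ¬ ∃ T : Set (Fin n), ∀ j : Fin m, ∃! i : Fin 3, c j i ∈ T := by
  rw [redDual_iff]
  constructor
  · rintro hcover ⟨T, hT⟩
    obtain ⟨hclosed, hB⟩ := isOneInThree_iff_redClosed.1 hT
    rcases hcover _ hclosed with hF | ⟨j, hj⟩
    · exact zv_notMem_image_xv (hF zv_mem_redF)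
    · exact hB j hj
  · intro hT C hC
    by_contra! ⟨hF, hB⟩
    have hz : zv ∉ C := fun hz ↦ hF (hC.redF_subset_s13 hz hB)
    have hCT : xv '' (xv ⁻¹' C) = C := hC.image_xv_preimage hz
    exact hT ⟨xv ⁻¹' C, isOneInThree_iff_redClosed.2 (by rw [hCT]; exact ⟨hC, hB⟩)⟩

theorem stmt_13 (n m : ℕ) (c : Fin m → Fin 3 → Fin n)
    (hdist : ∀ j : Fin m, Function.Injective (c j))
    (hvar : ∀ v : Fin n, ∃ (j : Fin m) (i : Fin 3), c j i = v) :
    RedDual c ↔ ¬ ∃ T : Set (Fin n), ∀ j : Fin m, ∃! i : Fin 3, c j i ∈ T :=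
  stmt_13_general c
end
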